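/- arXiv:math/9810001 — 8 statements merged into one kernel-verified Lean document; each statement's English description precedes it below -/
import Mathlib

section
/- The 3×3 integer matrix A_{1,0} = [[2,0,-1],[0,2,-2],[-1,-2,2]] satisfies: (a) it is a symmetric generalized Cartan matrix (symmetric, all diagonal entries 2, all off-diagonal entries nonpositive); (b) it has rank 3 over ℚ; (c) the real quadratic form x ↦ xᵀAx on ℝ³ is equivalent to the weighted sum of squares with weights (1,1,−1), i.e. A is hyperbolic of rank 3; (d) there exists c ∈ ℚ³ with Ac = −(1,1,1)ᵀ and cᵀAc < 0 (a lattice Weyl vector of negative square). -/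
open Matrix

/-- The matrix `A_{1,0}` from Nikulin's list of all twelve symmetric hyperbolic
generalized Cartan matrices of rank 3 with finite-volume fundamental chamber and
lattice Weyl vector of negative square:
(a) it is a symmetric generalized Cartan matrix;
(b) it has rank 3 over ℚ;
(c) the real quadratic form x ↦ xᵀAx is equivalent to the weighted sum of squares with
    weights (1,1,-1,0,…,0), i.e. A is hyperbolic of rank 3;
(d) it has a lattice Weyl vector of negative square: there is c ∈ ℚ^3 with
    Ac = -(1,…,1)ᵀ and cᵀAc < 0. -/
theorem stmt_0 :
    let A : Matrix (Fin 3) (Fin 3) ℤ :=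
      !![2, 0, -1;
        0, 2, -2;
        -1, -2, 2]
    -- (a) symmetric generalized Cartan matrix
    (Aᵀ = A ∧ (∀ i, A i i = 2) ∧ (∀ i j, i ≠ j → A i j ≤ 0)) ∧
    -- (b) rank 3 over ℚ
    (A.map ((↑·) : ℤ → ℚ)).rank = 3 ∧
    -- (c) hyperbolic of rank 3: x ↦ xᵀAx over ℝ is equivalent to the weighted
    -- sum of squares with weights (1,1,-1,0,…,0)
    (∃ P : Matrix (Fin 3) (Fin 3) ℝ, IsUnit P.det ∧
      Pᵀ * A.map ((↑·) : ℤ → ℝ) * P = Matrix.diagonal ![(1:ℝ),1,-1]) ∧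
    -- (d) lattice Weyl vector of negative square
    (∃ c : Fin 3 → ℚ, (∀ i, (A.map ((↑·) : ℤ → ℚ)).mulVec c i = -1) ∧
      c ⬝ᵥ (A.map ((↑·) : ℤ → ℚ)).mulVec c < 0) := by
  intro A
  refine ⟨⟨by decide, by decide, by
    intro i j hij
    fin_cases i <;> fin_cases j <;> simp [A] at hij ⊢⟩, ?_, ?_, ?_⟩
  · have h : IsUnit (A.map ((↑·) : ℤ → ℚ)) := by
      rw [Matrix.isUnit_iff_isUnit_det, isUnit_iff_ne_zero]
      simp [A, Matrix.det_fin_three]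
    rw [Matrix.rank_of_isUnit _ h]
    simp
  · obtain ⟨s, hs⟩ : ∃ s : ℝ, s * s = 1 / 2 :=
      ⟨Real.sqrt (1 / 2), Real.mul_self_sqrt (by norm_num)⟩
    have hs0 : s ≠ 0 := by
      rintro rfl
      norm_num at hs
    refine ⟨!![s, 0, s; 0, s, 2 * s; 0, 0, 2 * s], ?_, ?_⟩
    · rw [isUnit_iff_ne_zero]
      simp [Matrix.det_fin_three, hs0]
    · ext i j
      fin_cases i <;> fin_cases j <;>
        simp [A, Matrix.mul_apply, Fin.sum_univ_three, Matrix.diagonal] <;> grind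
  · refine ⟨![2, 9 / 2, 5], ?_, ?_⟩
    · intro i
      fin_cases i <;>
        simp [A, Matrix.mulVec, dotProduct, Fin.sum_univ_three] <;> norm_num
    · simp [A, Matrix.mulVec, dotProduct, Fin.sum_univ_three]
      norm_num
end

section
/- The 5×5 integer matrix A_{1,III} = [[2,-2,-6,-6,-2],[-2,2,0,-6,-7],[-6,0,2,-2,-6],[-6,-6,-2,2,0],[-2,-7,-6,0,2]] satisfies: (a) it is a symmetric generalized Cartan matrix (symmetric, all diagonal entries 2, all off-diagonal entries nonpositive); (b) it has rank 3 over ℚ; (c) the real quadratic form x ↦ xᵀAx on ℝ⁵ is equivalent to the weighted sum of squares with weights (1,1,−1,0,0), i.e. A is hyperbolic of rank 3; (d) there exists c ∈ ℚ⁵ with Ac = −(1,1,1,1,1)ᵀ and cᵀAc < 0 (a lattice Weyl vector of negative square). -/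
open Matrix

/-- The matrix `A_{1,III}` from Nikulin's list of all twelve symmetric hyperbolic
generalized Cartan matrices of rank 3 with finite-volume fundamental chamber and
lattice Weyl vector of negative square:
(a) it is a symmetric generalized Cartan matrix;
(b) it has rank 3 over ℚ;
(c) the real quadratic form x ↦ xᵀAx is equivalent to the weighted sum of squares with
    weights (1,1,-1,0,…,0), i.e. A is hyperbolic of rank 3;
(d) it has a lattice Weyl vector of negative square: there is c ∈ ℚ^5 with
    Ac = -(1,…,1)ᵀ and cᵀAc < 0. -/
theorem stmt_3 :
    let A : Matrix (Fin 5) (Fin 5) ℤ :=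
      !![2, -2, -6, -6, -2;
        -2, 2, 0, -6, -7;
        -6, 0, 2, -2, -6;
        -6, -6, -2, 2, 0;
        -2, -7, -6, 0, 2]
    -- (a) symmetric generalized Cartan matrix
    (Aᵀ = A ∧ (∀ i, A i i = 2) ∧ (∀ i j, i ≠ j → A i j ≤ 0)) ∧
    -- (b) rank 3 over ℚ
    (A.map ((↑·) : ℤ → ℚ)).rank = 3 ∧
    -- (c) hyperbolic of rank 3: x ↦ xᵀAx over ℝ is equivalent to the weighted
    -- sum of squares with weights (1,1,-1,0,…,0)
    (∃ P : Matrix (Fin 5) (Fin 5) ℝ, IsUnit P.det ∧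
      Pᵀ * A.map ((↑·) : ℤ → ℝ) * P = Matrix.diagonal ![(1:ℝ),1,-1,0,0]) ∧
    -- (d) lattice Weyl vector of negative square
    (∃ c : Fin 5 → ℚ, (∀ i, (A.map ((↑·) : ℤ → ℚ)).mulVec c i = -1) ∧
      c ⬝ᵥ (A.map ((↑·) : ℤ → ℚ)).mulVec c < 0) := by
  intro A
  refine ⟨⟨by decide, by decide, ?_⟩, ?_, ?_, ?_⟩
  · intro i j hij
    fin_cases i <;> fin_cases j <;> simp [A] at hij ⊢
  · apply le_antisymm
    · have h : A.map ((↑·) : ℤ → ℚ) =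
          (!![2, -2, -6; -2, 2, 0; -6, 0, 2; -6, -6, -2; -2, -7, -6] :
            Matrix (Fin 5) (Fin 3) ℚ) *
          (!![1, 0, 0, 1, 3/2; 0, 1, 0, -2, -2; 0, 0, 1, 2, 3/2] :
            Matrix (Fin 3) (Fin 5) ℚ) := by
        ext i j
        fin_cases i <;> fin_cases j <;>
          norm_num [A, Matrix.mul_apply, Fin.sum_univ_succ]
      rw [h]
      refine (Matrix.rank_mul_le_left _ _).trans ?_
      simpa using Matrix.rank_le_card_width
        (!![2, -2, -6; -2, 2, 0; -6, 0, 2; -6, -6, -2; -2, -7, -6] :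
            Matrix (Fin 5) (Fin 3) ℚ)
    · have h : (!![-1/18, -1/18, -1/6, 0, 0; -1/18, 4/9, -1/6, 0, 0; -1/6, -1/6, 0, 0, 0] :
            Matrix (Fin 3) (Fin 5) ℚ) * (A.map ((↑·) : ℤ → ℚ) *
          (!![1, 0, 0; 0, 1, 0; 0, 0, 1; 0, 0, 0; 0, 0, 0] :
            Matrix (Fin 5) (Fin 3) ℚ)) = 1 := by
        ext i j
        fin_cases i <;> fin_cases j <;>
          norm_num [A, Matrix.mul_apply, Fin.sum_univ_succ, Matrix.one_apply]
      calc 3 = (1 : Matrix (Fin 3) (Fin 3) ℚ).rank := by simp [Matrix.rank_one]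
        _ ≤ _ := by
          rw [← h]
          exact (Matrix.rank_mul_le_right _ _).trans (Matrix.rank_mul_le_left _ _)
  · obtain ⟨s, hs⟩ : ∃ s : ℝ, s * s = 1 / 2 :=
      ⟨√(1 / 2), Real.mul_self_sqrt (by norm_num)⟩
    have hs0 : s ≠ 0 := by
      rintro rfl
      norm_num at hs
    refine ⟨!![0, 0, s/3, -1, -3/2; s, 0, s/3, 2, 2; 0, s, s, -2, -3/2;
      0, 0, 0, 1, 0; 0, 0, 0, 0, 1], ?_, ?_⟩
    · rw [isUnit_iff_ne_zero]
      simp [Matrix.det_succ_row_zero, Fin.sum_univ_succ, Fin.succAbove, hs0]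
    · ext i j
      fin_cases i <;> fin_cases j <;>
        simp [A, Matrix.mul_apply, Fin.sum_univ_succ, -mul_eq_zero] <;>
        first | done | ring1 | linarith | nlinarith
  · refine ⟨![5/18, -2/9, 1/3, 0, 0], ?_, ?_⟩
    · intro i
      fin_cases i <;> norm_num [A, Matrix.mulVec, dotProduct, Fin.sum_univ_succ]
    · norm_num [A, Matrix.mulVec, dotProduct, Fin.sum_univ_succ]
end

section
/- The 4×4 integer matrix A_{2,I} = [[2,-2,-4,0],[-2,2,0,-4],[-4,0,2,-2],[0,-4,-2,2]] satisfies: (a) it is a symmetric generalized Cartan matrix (symmetric, all diagonal entries 2, all off-diagonal entries nonpositive); (b) it has rank 3 over ℚ; (c) the real quadratic form x ↦ xᵀAx on ℝ⁴ is equivalent to the weighted sum of squares with weights (1,1,−1,0), i.e. A is hyperbolic of rank 3; (d) there exists c ∈ ℚ⁴ with Ac = −(1,1,1,1)ᵀ and cᵀAc < 0 (a lattice Weyl vector of negative square). -/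
open Matrix

/-- The matrix `A_{2,I}` from Nikulin's list of all twelve symmetric hyperbolic
generalized Cartan matrices of rank 3 with finite-volume fundamental chamber and
lattice Weyl vector of negative square:
(a) it is a symmetric generalized Cartan matrix;
(b) it has rank 3 over ℚ;
(c) the real quadratic form x ↦ xᵀAx is equivalent to the weighted sum of squares with
    weights (1,1,-1,0,…,0), i.e. A is hyperbolic of rank 3;
(d) it has a lattice Weyl vector of negative square: there is c ∈ ℚ^4 with
    Ac = -(1,…,1)ᵀ and cᵀAc < 0. -/
theorem stmt_5 :
    let A : Matrix (Fin 4) (Fin 4) ℤ :=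
      !![2, -2, -4, 0;
        -2, 2, 0, -4;
        -4, 0, 2, -2;
        0, -4, -2, 2]
    -- (a) symmetric generalized Cartan matrix
    (Aᵀ = A ∧ (∀ i, A i i = 2) ∧ (∀ i j, i ≠ j → A i j ≤ 0)) ∧
    -- (b) rank 3 over ℚ
    (A.map ((↑·) : ℤ → ℚ)).rank = 3 ∧
    -- (c) hyperbolic of rank 3: x ↦ xᵀAx over ℝ is equivalent to the weighted
    -- sum of squares with weights (1,1,-1,0,…,0)
    (∃ P : Matrix (Fin 4) (Fin 4) ℝ, IsUnit P.det ∧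
      Pᵀ * A.map ((↑·) : ℤ → ℝ) * P = Matrix.diagonal ![(1:ℝ),1,-1,0]) ∧
    -- (d) lattice Weyl vector of negative square
    (∃ c : Fin 4 → ℚ, (∀ i, (A.map ((↑·) : ℤ → ℚ)).mulVec c i = -1) ∧
      c ⬝ᵥ (A.map ((↑·) : ℤ → ℚ)).mulVec c < 0) := by
  intro A
  refine ⟨⟨by decide, by decide, by
    intro i j
    fin_cases i <;> fin_cases j <;> simp [A]⟩, ?_, ?_, ?_⟩
  · -- conjugate to a diagonal matrix by the characters of the Klein four-group
    let Q : Matrix (Fin 4) (Fin 4) ℚ :=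
      !![1, 1, 1, 1; 1, -1, 1, -1; -1, -1, 1, 1; -1, 1, 1, -1]
    have hQQ : Q * ((1 / 4 : ℚ) • Qᵀ) = 1 := by
      ext i j
      fin_cases i <;> fin_cases j <;>
        simp [Q, Matrix.mul_apply, Fin.sum_univ_four] <;> norm_num
    have hQ : IsUnit Q.det := Matrix.isUnit_det_of_right_inverse hQQ
    have hQt : IsUnit Qᵀ.det := by rwa [Matrix.det_transpose]
    have h : Qᵀ * A.map ((↑·) : ℤ → ℚ) * Q = Matrix.diagonal ![(16:ℚ), 32, -16, 0] := by
      ext i j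
      fin_cases i <;> fin_cases j <;>
        simp [Q, A, Matrix.mul_apply, Fin.sum_univ_four] <;> norm_num
    have hr := congrArg Matrix.rank h
    rw [Matrix.rank_mul_eq_left_of_isUnit_det _ _ hQ,
      Matrix.rank_mul_eq_right_of_isUnit_det _ _ hQt, Matrix.rank_diagonal] at hr
    rw [hr, Fintype.card_subtype]
    decide +kernel
  · have h2 : √2 * √2 = (2 : ℝ) := Real.mul_self_sqrt (by norm_num)
    have h2p : (√2 : ℝ) ≠ 0 := by positivity
    generalize (√2 : ℝ) = r at h2 h2p
    let P : Matrix (Fin 4) (Fin 4) ℝ :=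
      !![1 / 4, r / 8, 1 / 4, 1; 1 / 4, -(r / 8), 1 / 4, -1;
        -(1 / 4), -(r / 8), 1 / 4, 1; -(1 / 4), r / 8, 1 / 4, -1]
    let R : Matrix (Fin 4) (Fin 4) ℝ :=
      !![1, 1, -1, -1; r, -r, -r, r; 1, 1, 1, 1; 1 / 4, -(1 / 4), 1 / 4, -(1 / 4)]
    have hPR : P * R = 1 := by
      ext i j
      fin_cases i <;> fin_cases j <;>
        simp [P, R, Matrix.mul_apply, Fin.sum_univ_four] <;> linarith
    refine ⟨P, Matrix.isUnit_det_of_right_inverse hPR, ?_⟩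
    ext i j
    fin_cases i <;> fin_cases j <;>
      simp [P, A, Matrix.mul_apply, Fin.sum_univ_four] <;> linarith
  · refine ⟨fun _ => 1 / 4, ?_, ?_⟩
    · intro i
      fin_cases i <;> simp [A, Matrix.mulVec, dotProduct, Fin.sum_univ_four] <;> norm_num
    · simp [A, Matrix.mulVec, dotProduct, Fin.sum_univ_four]
      try norm_num
end

section
/- The 4×4 integer matrix A_{2,II} = [[2,-2,-6,-2],[-2,2,-2,-6],[-6,-2,2,-2],[-2,-6,-2,2]] satisfies: (a) it is a symmetric generalized Cartan matrix (symmetric, all diagonal entries 2, all off-diagonal entries nonpositive); (b) it has rank 3 over ℚ; (c) the real quadratic form x ↦ xᵀAx on ℝ⁴ is equivalent to the weighted sum of squares with weights (1,1,−1,0), i.e. A is hyperbolic of rank 3; (d) there exists c ∈ ℚ⁴ with Ac = −(1,1,1,1)ᵀ and cᵀAc < 0 (a lattice Weyl vector of negative square). -/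
open Matrix

/-- The matrix `A_{2,II}` from Nikulin's list of all twelve symmetric hyperbolic
generalized Cartan matrices of rank 3 with finite-volume fundamental chamber and
lattice Weyl vector of negative square:
(a) it is a symmetric generalized Cartan matrix;
(b) it has rank 3 over ℚ;
(c) the real quadratic form x ↦ xᵀAx is equivalent to the weighted sum of squares with
    weights (1,1,-1,0,…,0), i.e. A is hyperbolic of rank 3;
(d) it has a lattice Weyl vector of negative square: there is c ∈ ℚ^4 with
    Ac = -(1,…,1)ᵀ and cᵀAc < 0. -/
theorem stmt_6 :
    let A : Matrix (Fin 4) (Fin 4) ℤ :=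
      !![2, -2, -6, -2;
        -2, 2, -2, -6;
        -6, -2, 2, -2;
        -2, -6, -2, 2]
    -- (a) symmetric generalized Cartan matrix
    (Aᵀ = A ∧ (∀ i, A i i = 2) ∧ (∀ i j, i ≠ j → A i j ≤ 0)) ∧
    -- (b) rank 3 over ℚ
    (A.map ((↑·) : ℤ → ℚ)).rank = 3 ∧
    -- (c) hyperbolic of rank 3: x ↦ xᵀAx over ℝ is equivalent to the weighted
    -- sum of squares with weights (1,1,-1,0,…,0)
    (∃ P : Matrix (Fin 4) (Fin 4) ℝ, IsUnit P.det ∧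
      Pᵀ * A.map ((↑·) : ℤ → ℝ) * P = Matrix.diagonal ![(1:ℝ),1,-1,0]) ∧
    -- (d) lattice Weyl vector of negative square
    (∃ c : Fin 4 → ℚ, (∀ i, (A.map ((↑·) : ℤ → ℚ)).mulVec c i = -1) ∧
      c ⬝ᵥ (A.map ((↑·) : ℤ → ℚ)).mulVec c < 0) := by
  intro A
  refine ⟨⟨by decide, by decide, by
    intro i j
    fin_cases i <;> fin_cases j <;> simp [A]⟩, ?_, ?_, ?_⟩
  · -- congruence over ℚ with a diagonal matrix
    let Q : Matrix (Fin 4) (Fin 4) ℚ :=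
      !![1, 0, 1, 1; 0, 1, 1, -1; -1, 0, 1, 1; 0, -1, 1, -1]
    have hQ : IsUnit Q.det := by
      rw [isUnit_iff_ne_zero]
      simp [Q, Matrix.det_succ_row_zero, Fin.sum_univ_succ, Fin.succAbove]
      try norm_num
    have hQt : IsUnit Qᵀ.det := by rwa [Matrix.det_transpose]
    have h : Qᵀ * A.map ((↑·) : ℤ → ℚ) * Q = Matrix.diagonal ![(16:ℚ), 16, -32, 0] := by
      ext i j
      fin_cases i <;> fin_cases j <;>
        simp [A, Q, Matrix.mul_apply, Fin.sum_univ_four] <;> norm_num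
    have h2 := congrArg Matrix.rank h
    rw [Matrix.rank_mul_eq_left_of_isUnit_det _ _ hQ,
      Matrix.rank_mul_eq_right_of_isUnit_det _ _ hQt, Matrix.rank_diagonal] at h2
    rw [h2, Fintype.card_subtype]
    have : (Finset.univ.filter fun i : Fin 4 => ![(16:ℚ), 16, -32, 0] i ≠ 0) = {0, 1, 2} := by
      ext i
      fin_cases i <;> simp
    rw [this]
    rfl
  · have hs : √2 * √2 = (2:ℝ) := Real.mul_self_sqrt (by norm_num)
    have hs0 : √2 ≠ (0:ℝ) := by positivity
    generalize √2 = s at hs hs0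
    refine ⟨!![1/4, 0, s/8, 1; 0, 1/4, s/8, -1; -1/4, 0, s/8, 1; 0, -1/4, s/8, -1], ?_, ?_⟩
    · rw [isUnit_iff_ne_zero]
      simp [Matrix.det_succ_row_zero, Fin.sum_univ_succ, Fin.succAbove]
      ring_nf
      simpa using hs0
    · ext i j
      fin_cases i <;> fin_cases j <;>
        simp [A, Matrix.mul_apply, Fin.sum_univ_four] <;> linarith
  · refine ⟨fun _ => 1/8, ?_, ?_⟩
    · intro i
      fin_cases i <;> simp [A, Matrix.mulVec, dotProduct, Fin.sum_univ_four] <;> norm_num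
    · simp [A, Matrix.mulVec, dotProduct, Fin.sum_univ_four]
      norm_num
end

section
/- The 8×8 integer matrix A_{2,III} with rows [2,-2,-8,-16,-18,-14,-8,0], [-2,2,0,-8,-14,-18,-16,-8], [-8,0,2,-2,-8,-16,-18,-14], [-16,-8,-2,2,0,-8,-14,-18], [-18,-14,-8,0,2,-2,-8,-16], [-14,-18,-16,-8,-2,2,0,-8], [-8,-16,-18,-14,-8,0,2,-2], [0,-8,-14,-18,-16,-8,-2,2] satisfies: (a) it is a symmetric generalized Cartan matrix (symmetric, all diagonal entries 2, all off-diagonal entries nonpositive); (b) it has rank 3 over ℚ; (c) the real quadratic form x ↦ xᵀAx on ℝ⁸ is equivalent to the weighted sum of squares with weights (1,1,−1,0,0,0,0,0), i.e. A is hyperbolic of rank 3; (d) there exists c ∈ ℚ⁸ with Ac = −(1,…,1)ᵀ and cᵀAc < 0 (a lattice Weyl vector of negative square). -/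
open Matrix

def auxA : Matrix (Fin 8) (Fin 8) ℤ :=
  !![2, -2, -8, -16, -18, -14, -8, 0;
    -2, 2, 0, -8, -14, -18, -16, -8;
    -8, 0, 2, -2, -8, -16, -18, -14;
    -16, -8, -2, 2, 0, -8, -14, -18;
    -18, -14, -8, 0, 2, -2, -8, -16;
    -14, -18, -16, -8, -2, 2, 0, -8;
    -8, -16, -18, -14, -8, 0, 2, -2;
    0, -8, -14, -18, -16, -8, -2, 2]

/-- Integral change of basis diagonalising `auxA`. -/
def auxQ : Matrix (Fin 8) (Fin 8) ℤ :=
  !![0, 0, 1, -1, -2, -3, -3, -2;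
    4, 0, 1, 3, 5, 6, 5, 2;
    0, 4, 4, -3, -4, -4, -3, -1;
    0, 0, 0, 1, 0, 0, 0, 0;
    0, 0, 0, 0, 1, 0, 0, 0;
    0, 0, 0, 0, 0, 1, 0, 0;
    0, 0, 0, 0, 0, 0, 1, 0;
    0, 0, 0, 0, 0, 0, 0, 1]

/-- Four times the inverse of `auxQ`. -/
def auxS : Matrix (Fin 8) (Fin 8) ℤ :=
  !![-1, 1, 0, -4, -7, -9, -8, -4;
    -4, 0, 1, -1, -4, -8, -9, -7;
    4, 0, 0, 4, 8, 12, 12, 8;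
    0, 0, 0, 4, 0, 0, 0, 0;
    0, 0, 0, 0, 4, 0, 0, 0;
    0, 0, 0, 0, 0, 4, 0, 0;
    0, 0, 0, 0, 0, 0, 4, 0;
    0, 0, 0, 0, 0, 0, 0, 4]

def auxD : Fin 8 → ℤ := ![32, 32, -32, 0, 0, 0, 0, 0]

set_option maxRecDepth 100000 in
theorem auxSQ : auxS * auxQ = Matrix.diagonal (fun _ => 4) := by decide +kernel

set_option maxRecDepth 100000 in
theorem auxQAQ : auxQᵀ * auxA * auxQ = Matrix.diagonal auxD := by decide +kernel

theorem auxQ_det : auxQ.det ≠ 0 := by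
  intro h
  have h1 := congrArg Matrix.det auxSQ
  rw [Matrix.det_mul, h, Matrix.det_diagonal] at h1
  norm_num at h1

theorem auxMapDet {K : Type*} [Field K] [CharZero K] :
    IsUnit (auxQ.map ((↑·) : ℤ → K)).det := by
  have h : (auxQ.map ((↑·) : ℤ → K)).det = (auxQ.det : K) :=
    ((Int.castRingHom K).map_det auxQ).symm
  rw [h, isUnit_iff_ne_zero]
  exact_mod_cast auxQ_det

theorem auxMapQAQ {K : Type*} [Field K] [CharZero K] :
    (auxQ.map ((↑·) : ℤ → K))ᵀ * auxA.map ((↑·) : ℤ → K) * auxQ.map ((↑·) : ℤ → K)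
      = Matrix.diagonal (fun i => (auxD i : K)) := by
  have h := congrArg (fun M => M.map (Int.castRingHom K)) auxQAQ
  simp only [Matrix.map_mul] at h
  rw [Matrix.diagonal_map (map_zero _)] at h
  exact h

theorem auxRank : (auxA.map ((↑·) : ℤ → ℚ)).rank = 3 := by
  have h := congrArg Matrix.rank (auxMapQAQ (K := ℚ))
  rw [Matrix.rank_mul_eq_left_of_isUnit_det _ _ auxMapDet,
    Matrix.rank_mul_eq_right_of_isUnit_det _ _ (by rw [Matrix.det_transpose]; exact auxMapDet),
    Matrix.rank_diagonal] at h
  rw [h]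
  simp only [ne_eq, Int.cast_eq_zero]
  decide +kernel

theorem auxReal : ∃ P : Matrix (Fin 8) (Fin 8) ℝ, IsUnit P.det ∧
    Pᵀ * auxA.map ((↑·) : ℤ → ℝ) * P = Matrix.diagonal ![(1:ℝ),1,-1,0,0,0,0,0] := by
  refine ⟨(Real.sqrt 32)⁻¹ • auxQ.map ((↑·) : ℤ → ℝ), ?_, ?_⟩
  · rw [Matrix.det_smul]
    refine IsUnit.mul ?_ auxMapDet
    rw [isUnit_iff_ne_zero]
    positivity
  · have h2 : (Real.sqrt 32)⁻¹ * (Real.sqrt 32)⁻¹ = (32:ℝ)⁻¹ := by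
      rw [← mul_inv, Real.mul_self_sqrt (by norm_num)]
    rw [Matrix.transpose_smul, Matrix.smul_mul, Matrix.smul_mul, Matrix.mul_smul, smul_smul,
      auxMapQAQ, h2, ← Matrix.diagonal_smul]
    congr 1
    funext i
    fin_cases i <;> simp [auxD]

theorem auxNonpos : ∀ i j, i ≠ j → auxA i j ≤ 0 := by
  intro i j hij
  fin_cases i <;> fin_cases j <;> first | exact absurd rfl hij | simp [auxA]

theorem auxWeyl : ∃ c : Fin 8 → ℚ, (∀ i, (auxA.map ((↑·) : ℤ → ℚ)).mulVec c i = -1) ∧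
      c ⬝ᵥ (auxA.map ((↑·) : ℤ → ℚ)).mulVec c < 0 := by
  refine ⟨![3/16, -5/16, 1/4, 0, 0, 0, 0, 0], ?_, ?_⟩ <;> decide +kernel

/-- The matrix `A_{2,III}` from Nikulin's list of all twelve symmetric hyperbolic
generalized Cartan matrices of rank 3 with finite-volume fundamental chamber and
lattice Weyl vector of negative square:
(a) it is a symmetric generalized Cartan matrix;
(b) it has rank 3 over ℚ;
(c) the real quadratic form x ↦ xᵀAx is equivalent to the weighted sum of squares with
    weights (1,1,-1,0,…,0), i.e. A is hyperbolic of rank 3;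
(d) it has a lattice Weyl vector of negative square: there is c ∈ ℚ^8 with
    Ac = -(1,…,1)ᵀ and cᵀAc < 0. -/
theorem stmt_7 :
    let A : Matrix (Fin 8) (Fin 8) ℤ :=
      !![2, -2, -8, -16, -18, -14, -8, 0;
        -2, 2, 0, -8, -14, -18, -16, -8;
        -8, 0, 2, -2, -8, -16, -18, -14;
        -16, -8, -2, 2, 0, -8, -14, -18;
        -18, -14, -8, 0, 2, -2, -8, -16;
        -14, -18, -16, -8, -2, 2, 0, -8;
        -8, -16, -18, -14, -8, 0, 2, -2;
        0, -8, -14, -18, -16, -8, -2, 2]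
    -- (a) symmetric generalized Cartan matrix
    (Aᵀ = A ∧ (∀ i, A i i = 2) ∧ (∀ i j, i ≠ j → A i j ≤ 0)) ∧
    -- (b) rank 3 over ℚ
    (A.map ((↑·) : ℤ → ℚ)).rank = 3 ∧
    -- (c) hyperbolic of rank 3: x ↦ xᵀAx over ℝ is equivalent to the weighted
    -- sum of squares with weights (1,1,-1,0,…,0)
    (∃ P : Matrix (Fin 8) (Fin 8) ℝ, IsUnit P.det ∧
      Pᵀ * A.map ((↑·) : ℤ → ℝ) * P = Matrix.diagonal ![(1:ℝ),1,-1,0,0,0,0,0]) ∧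
    -- (d) lattice Weyl vector of negative square
    (∃ c : Fin 8 → ℚ, (∀ i, (A.map ((↑·) : ℤ → ℚ)).mulVec c i = -1) ∧
      c ⬝ᵥ (A.map ((↑·) : ℤ → ℚ)).mulVec c < 0) := by
  intro A
  exact ⟨⟨by decide +kernel, by decide +kernel, auxNonpos⟩, auxRank, auxReal, auxWeyl⟩
end

section
/- The 3×3 integer matrix A_{3,0} = [[2,-2,-2],[-2,2,-1],[-2,-1,2]] satisfies: (a) it is a symmetric generalized Cartan matrix (symmetric, all diagonal entries 2, all off-diagonal entries nonpositive); (b) it has rank 3 over ℚ; (c) the real quadratic form x ↦ xᵀAx on ℝ³ is equivalent to the weighted sum of squares with weights (1,1,−1), i.e. A is hyperbolic of rank 3; (d) there exists c ∈ ℚ³ with Ac = −(1,1,1)ᵀ and cᵀAc < 0 (a lattice Weyl vector of negative square). -/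
open Matrix

/-- The matrix `A_{3,0}` from Nikulin's list of all twelve symmetric hyperbolic
generalized Cartan matrices of rank 3 with finite-volume fundamental chamber and
lattice Weyl vector of negative square:
(a) it is a symmetric generalized Cartan matrix;
(b) it has rank 3 over ℚ;
(c) the real quadratic form x ↦ xᵀAx is equivalent to the weighted sum of squares with
    weights (1,1,-1,0,…,0), i.e. A is hyperbolic of rank 3;
(d) it has a lattice Weyl vector of negative square: there is c ∈ ℚ^3 with
    Ac = -(1,…,1)ᵀ and cᵀAc < 0. -/
theorem stmt_8 :
    let A : Matrix (Fin 3) (Fin 3) ℤ :=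
      !![2, -2, -2;
        -2, 2, -1;
        -2, -1, 2]
    -- (a) symmetric generalized Cartan matrix
    (Aᵀ = A ∧ (∀ i, A i i = 2) ∧ (∀ i j, i ≠ j → A i j ≤ 0)) ∧
    -- (b) rank 3 over ℚ
    (A.map ((↑·) : ℤ → ℚ)).rank = 3 ∧
    -- (c) hyperbolic of rank 3: x ↦ xᵀAx over ℝ is equivalent to the weighted
    -- sum of squares with weights (1,1,-1,0,…,0)
    (∃ P : Matrix (Fin 3) (Fin 3) ℝ, IsUnit P.det ∧
      Pᵀ * A.map ((↑·) : ℤ → ℝ) * P = Matrix.diagonal ![(1:ℝ),1,-1]) ∧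
    -- (d) lattice Weyl vector of negative square
    (∃ c : Fin 3 → ℚ, (∀ i, (A.map ((↑·) : ℤ → ℚ)).mulVec c i = -1) ∧
      c ⬝ᵥ (A.map ((↑·) : ℤ → ℚ)).mulVec c < 0) := by
  intro A
  refine ⟨⟨?_, ?_, ?_⟩, ?_, ?_, ?_⟩
  · decide
  · decide
  · intro i j hij
    fin_cases i <;> fin_cases j <;> simp_all [A]
  · have hdet : IsUnit (A.map ((↑·) : ℤ → ℚ)).det := by
      rw [isUnit_iff_ne_zero]
      simp [A, Matrix.det_fin_three]
      norm_num
    have h := Matrix.rank_of_isUnit _ ((Matrix.isUnit_iff_isUnit_det _).2 hdet)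
    simpa using h
  · obtain ⟨s, hs⟩ : ∃ s : ℝ, s * s = 1 / 6 :=
      ⟨√(1 / 6), Real.mul_self_sqrt (by norm_num)⟩
    obtain ⟨t, ht⟩ : ∃ t : ℝ, t * t = 1 / 2 :=
      ⟨√(1 / 2), Real.mul_self_sqrt (by norm_num)⟩
    have ht0 : t ≠ 0 := by rintro rfl; norm_num at ht
    have hs0 : s ≠ 0 := by rintro rfl; norm_num at hs
    refine ⟨!![0, t, 2 * s; s, 0, s; -s, 0, s], ?_, ?_⟩
    · rw [isUnit_iff_ne_zero]
      have : (!![0, t, 2 * s; s, 0, s; -s, 0, s] : Matrix (Fin 3) (Fin 3) ℝ).det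
          = -2 * t * s * s := by
        simp [Matrix.det_fin_three]
        ring
      rw [this]
      simp [ht0, hs0]
    · ext i j
      fin_cases i <;> fin_cases j <;>
        simp [A, Matrix.mul_apply, Fin.sum_univ_three] <;>
        first | linarith | grind
  · refine ⟨![5 / 6, 2 / 3, 2 / 3], ?_, ?_⟩
    · intro i
      fin_cases i <;> simp [A, Matrix.mulVec, dotProduct, Fin.sum_univ_three] <;> norm_num
    · simp [A, Matrix.mulVec, dotProduct, Fin.sum_univ_three]
      norm_num
end

section
/- The 4×4 integer matrix A_{3,I} = [[2,-2,-5,-1],[-2,2,-1,-5],[-5,-1,2,-2],[-1,-5,-2,2]] satisfies: (a) it is a symmetric generalized Cartan matrix (symmetric, all diagonal entries 2, all off-diagonal entries nonpositive); (b) it has rank 3 over ℚ; (c) the real quadratic form x ↦ xᵀAx on ℝ⁴ is equivalent to the weighted sum of squares with weights (1,1,−1,0), i.e. A is hyperbolic of rank 3; (d) there exists c ∈ ℚ⁴ with Ac = −(1,1,1,1)ᵀ and cᵀAc < 0 (a lattice Weyl vector of negative square). -/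
open Matrix

/-- The matrix `A_{3,I}` from Nikulin's list of all twelve symmetric hyperbolic
generalized Cartan matrices of rank 3 with finite-volume fundamental chamber and
lattice Weyl vector of negative square:
(a) it is a symmetric generalized Cartan matrix;
(b) it has rank 3 over ℚ;
(c) the real quadratic form x ↦ xᵀAx is equivalent to the weighted sum of squares with
    weights (1,1,-1,0,…,0), i.e. A is hyperbolic of rank 3;
(d) it has a lattice Weyl vector of negative square: there is c ∈ ℚ^4 with
    Ac = -(1,…,1)ᵀ and cᵀAc < 0. -/
theorem stmt_9 :
    let A : Matrix (Fin 4) (Fin 4) ℤ :=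
      !![2, -2, -5, -1;
        -2, 2, -1, -5;
        -5, -1, 2, -2;
        -1, -5, -2, 2]
    -- (a) symmetric generalized Cartan matrix
    (Aᵀ = A ∧ (∀ i, A i i = 2) ∧ (∀ i j, i ≠ j → A i j ≤ 0)) ∧
    -- (b) rank 3 over ℚ
    (A.map ((↑·) : ℤ → ℚ)).rank = 3 ∧
    -- (c) hyperbolic of rank 3: x ↦ xᵀAx over ℝ is equivalent to the weighted
    -- sum of squares with weights (1,1,-1,0,…,0)
    (∃ P : Matrix (Fin 4) (Fin 4) ℝ, IsUnit P.det ∧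
      Pᵀ * A.map ((↑·) : ℤ → ℝ) * P = Matrix.diagonal ![(1:ℝ),1,-1,0]) ∧
    -- (d) lattice Weyl vector of negative square
    (∃ c : Fin 4 → ℚ, (∀ i, (A.map ((↑·) : ℤ → ℚ)).mulVec c i = -1) ∧
      c ⬝ᵥ (A.map ((↑·) : ℤ → ℚ)).mulVec c < 0) := by
  intro A
  refine ⟨⟨by decide, by decide, ?_⟩, ?_, ?_, ?_⟩
  · intro i j hij
    fin_cases i <;> fin_cases j <;> simp [A] at hij ⊢
  · let H : Matrix (Fin 4) (Fin 4) ℚ :=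
      !![1, 1, 1, 1; 1, -1, 1, -1; -1, -1, 1, 1; -1, 1, 1, -1]
    have hdet : IsUnit H.det := by
      rw [isUnit_iff_ne_zero]
      simp [H, Matrix.det_succ_row_zero, Fin.sum_univ_succ, Fin.succAbove]
      try norm_num
    have hdet' : IsUnit Hᵀ.det := by rwa [Matrix.det_transpose]
    have h : Hᵀ * (A.map ((↑·) : ℤ → ℚ)) * H = Matrix.diagonal ![(24:ℚ), 32, -24, 0] := by
      ext i j
      fin_cases i <;> fin_cases j <;>
        simp [A, H, Matrix.mul_apply, Fin.sum_univ_succ] <;> norm_num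
    rw [← Matrix.rank_mul_eq_right_of_isUnit_det Hᵀ _ hdet',
      ← Matrix.rank_mul_eq_left_of_isUnit_det H _ hdet, h, Matrix.rank_diagonal]
    decide +kernel
  · obtain ⟨s, hs⟩ : ∃ s : ℝ, s * s = 1 / 24 :=
      ⟨√(1 / 24), Real.mul_self_sqrt (by norm_num)⟩
    obtain ⟨t, ht⟩ : ∃ t : ℝ, t * t = 1 / 32 :=
      ⟨√(1 / 32), Real.mul_self_sqrt (by norm_num)⟩
    refine ⟨!![s, t, s, 1; s, -t, s, -1; -s, -t, s, 1; -s, t, s, -1], ?_, ?_⟩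
    · rw [isUnit_iff_ne_zero]
      have h0 : t ≠ 0 := by rintro rfl; norm_num at ht
      intro h
      simp [Matrix.det_succ_row_zero, Fin.sum_univ_succ, Fin.succAbove] at h
      apply h0
      grind
    · ext i j
      fin_cases i <;> fin_cases j <;>
        simp [A, Matrix.mul_apply, Fin.sum_univ_succ] <;> grind
  · refine ⟨fun _ => 1 / 6, ?_, ?_⟩
    · intro i
      fin_cases i <;>
        simp [A, Matrix.mulVec, dotProduct, Fin.sum_univ_succ] <;> norm_num
    · simp [A, Matrix.mulVec, dotProduct, Fin.sum_univ_succ]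
      try norm_num
end

section
/- The 12×12 integer matrix A_{3,III} with rows [2,-2,-11,-25,-37,-47,-50,-46,-37,-23,-11,-1], [-2,2,-1,-11,-23,-37,-46,-50,-47,-37,-25,-11], [-11,-1,2,-2,-11,-25,-37,-47,-50,-46,-37,-23], [-25,-11,-2,2,-1,-11,-23,-37,-46,-50,-47,-37], [-37,-23,-11,-1,2,-2,-11,-25,-37,-47,-50,-46], [-47,-37,-25,-11,-2,2,-1,-11,-23,-37,-46,-50], [-50,-46,-37,-23,-11,-1,2,-2,-11,-25,-37,-47], [-46,-50,-47,-37,-25,-11,-2,2,-1,-11,-23,-37], [-37,-47,-50,-46,-37,-23,-11,-1,2,-2,-11,-25], [-23,-37,-46,-50,-47,-37,-25,-11,-2,2,-1,-11], [-11,-25,-37,-47,-50,-46,-37,-23,-11,-1,2,-2], [-1,-11,-23,-37,-46,-50,-47,-37,-25,-11,-2,2] satisfies: (a) it is a symmetric generalized Cartan matrix (symmetric, all diagonal entries 2, all off-diagonal entries nonpositive); (b) it has rank 3 over ℚ; (c) the real quadratic form x ↦ xᵀAx on ℝ¹² is equivalent to the weighted sum of squares with weights (1,1,−1,0,…,0),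 i.e. A is hyperbolic of rank 3; (d) there exists c ∈ ℚ¹² with Ac = −(1,…,1)ᵀ and cᵀAc < 0 (a lattice Weyl vector of negative square). -/
open Matrix

/-- Change of basis diagonalizing the form. -/
def Qm : Matrix (Fin 12) (Fin 12) ℤ :=
  !![1, -5, 11, -1, -5, -9, -6, -7, -7, -6, -9, -5;
     0, 39, 0, 3, 13, 21, 13, 14, 13, 10, 13, 5;
     0, -8, 2, -3, -10, -14, -8, -8, -7, -5, -6, -2;
     0, 0, 0, 1, 0, 0, 0, 0, 0, 0, 0, 0;
     0, 0, 0, 0, 2, 0, 0, 0, 0, 0, 0, 0;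
     0, 0, 0, 0, 0, 2, 0, 0, 0, 0, 0, 0;
     0, 0, 0, 0, 0, 0, 1, 0, 0, 0, 0, 0;
     0, 0, 0, 0, 0, 0, 0, 1, 0, 0, 0, 0;
     0, 0, 0, 0, 0, 0, 0, 0, 1, 0, 0, 0;
     0, 0, 0, 0, 0, 0, 0, 0, 0, 1, 0, 0;
     0, 0, 0, 0, 0, 0, 0, 0, 0, 0, 2, 0;
     0, 0, 0, 0, 0, 0, 0, 0, 0, 0, 0, 2]

/-- Inverse of `Qm` up to the scalar 78. -/
def Rm : Matrix (Fin 12) (Fin 12) ℤ :=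
  !![78, -78, -429, -975, -1443, -1833, -1950, -1794, -1443, -897, -429, -39;
     0, 2, 0, -6, -13, -21, -26, -28, -26, -20, -13, -5;
     0, 8, 39, 93, 143, 189, 208, 200, 169, 115, 65, 19;
     0, 0, 0, 78, 0, 0, 0, 0, 0, 0, 0, 0;
     0, 0, 0, 0, 39, 0, 0, 0, 0, 0, 0, 0;
     0, 0, 0, 0, 0, 39, 0, 0, 0, 0, 0, 0;
     0, 0, 0, 0, 0, 0, 78, 0, 0, 0, 0, 0;
     0, 0, 0, 0, 0, 0, 0, 78, 0, 0, 0, 0;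
     0, 0, 0, 0, 0, 0, 0, 0, 78, 0, 0, 0;
     0, 0, 0, 0, 0, 0, 0, 0, 0, 78, 0, 0;
     0, 0, 0, 0, 0, 0, 0, 0, 0, 0, 39, 0;
     0, 0, 0, 0, 0, 0, 0, 0, 0, 0, 0, 39]

def dv : Fin 12 → ℤ := ![2, 3744, -234, 0, 0, 0, 0, 0, 0, 0, 0, 0]

lemma QR : Qm * Rm = Matrix.diagonal (fun _ => 78) := by decide +kernel

lemma detQ {K : Type*} [Field K] [CharZero K] : IsUnit (Qm.map (Int.cast : ℤ → K)).det := by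
  have h := congrArg (fun M => M.map (Int.castRingHom K)) QR
  simp only [Matrix.map_mul] at h
  have h2 := congrArg Matrix.det h
  rw [Matrix.det_mul, Matrix.diagonal_map (by simp), Matrix.det_diagonal] at h2
  refine IsUnit.mk0 _ fun h0 => ?_
  have h0' : (Qm.map (Int.castRingHom K)).det = 0 := h0
  rw [h0'] at h2
  norm_num at h2

lemma offDiag (A : Matrix (Fin 12) (Fin 12) ℤ)
    (h : (List.finRange 12).all (fun i => (List.finRange 12).all
      (fun j => decide (i = j) || decide (A i j ≤ 0))) = true) :
    ∀ i j, i ≠ j → A i j ≤ 0 := by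
  intro i j hij
  simp only [List.all_eq_true, List.mem_finRange, forall_const, Bool.or_eq_true,
    decide_eq_true_eq] at h
  exact (h i j).resolve_left hij

lemma diagCast {K : Type*} [Field K] (A : Matrix (Fin 12) (Fin 12) ℤ)
    (h : Qmᵀ * A * Qm = Matrix.diagonal dv) :
    (Qm.map (Int.cast : ℤ → K))ᵀ * A.map (Int.cast : ℤ → K) * Qm.map (Int.cast : ℤ → K)
      = Matrix.diagonal (fun i => (dv i : K)) := by
  have h := congrArg (fun M => M.map (Int.castRingHom K)) h
  simp only [Matrix.map_mul] at h
  rw [Matrix.diagonal_map (by simp)] at h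
  exact h

theorem stmt_11 :
    let A : Matrix (Fin 12) (Fin 12) ℤ :=
      !![2, -2, -11, -25, -37, -47, -50, -46, -37, -23, -11, -1;
        -2, 2, -1, -11, -23, -37, -46, -50, -47, -37, -25, -11;
        -11, -1, 2, -2, -11, -25, -37, -47, -50, -46, -37, -23;
        -25, -11, -2, 2, -1, -11, -23, -37, -46, -50, -47, -37;
        -37, -23, -11, -1, 2, -2, -11, -25, -37, -47, -50, -46;
        -47, -37, -25, -11, -2, 2, -1, -11, -23, -37, -46, -50;
        -50, -46, -37, -23, -11, -1, 2, -2, -11, -25, -37, -47;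
        -46, -50, -47, -37, -25, -11, -2, 2, -1, -11, -23, -37;
        -37, -47, -50, -46, -37, -23, -11, -1, 2, -2, -11, -25;
        -23, -37, -46, -50, -47, -37, -25, -11, -2, 2, -1, -11;
        -11, -25, -37, -47, -50, -46, -37, -23, -11, -1, 2, -2;
        -1, -11, -23, -37, -46, -50, -47, -37, -25, -11, -2, 2]
    -- (a) symmetric generalized Cartan matrix
    (Aᵀ = A ∧ (∀ i, A i i = 2) ∧ (∀ i j, i ≠ j → A i j ≤ 0)) ∧
    -- (b) rank 3 over ℚ
    (A.map ((↑·) : ℤ → ℚ)).rank = 3 ∧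
    -- (c) hyperbolic of rank 3: x ↦ xᵀAx over ℝ is equivalent to the weighted
    -- sum of squares with weights (1,1,-1,0,…,0)
    (∃ P : Matrix (Fin 12) (Fin 12) ℝ, IsUnit P.det ∧
      Pᵀ * A.map ((↑·) : ℤ → ℝ) * P = Matrix.diagonal ![(1:ℝ),1,-1,0,0,0,0,0,0,0,0,0]) ∧
    -- (d) lattice Weyl vector of negative square
    (∃ c : Fin 12 → ℚ, (∀ i, (A.map ((↑·) : ℤ → ℚ)).mulVec c i = -1) ∧
      c ⬝ᵥ (A.map ((↑·) : ℤ → ℚ)).mulVec c < 0) := by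
  intro A
  have hD : Qmᵀ * A * Qm = Matrix.diagonal dv := by decide +kernel
  refine ⟨⟨by decide +kernel, by decide +kernel, offDiag A (by decide +kernel)⟩, ?_, ?_, ?_⟩
  · have h := diagCast (K := ℚ) A hD
    have hu : IsUnit (Qm.map (Int.cast : ℤ → ℚ)).det := detQ
    have h2 := congrArg Matrix.rank h
    rw [Matrix.rank_mul_eq_left_of_isUnit_det _ _ hu,
      Matrix.rank_mul_eq_right_of_isUnit_det _ _ (by rwa [Matrix.det_transpose]),
      Matrix.rank_diagonal] at h2
    refine h2.trans ?_
    have : ∀ i, ((dv i : ℚ) ≠ 0) ↔ dv i ≠ 0 := fun i => by simp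
    simp only [this]
    decide +kernel
  · have h := diagCast (K := ℝ) A hD
    have hu : IsUnit (Qm.map (Int.cast : ℤ → ℝ)).det := detQ
    let s : Fin 12 → ℝ := ![(√2)⁻¹, (√3744)⁻¹, (√234)⁻¹, 1, 1, 1, 1, 1, 1, 1, 1, 1]
    refine ⟨Qm.map (Int.cast : ℤ → ℝ) * Matrix.diagonal s, ?_, ?_⟩
    · rw [Matrix.det_mul, Matrix.det_diagonal]
      refine hu.mul (IsUnit.mk0 _ (Finset.prod_ne_zero_iff.2 fun i _ => ?_))
      fin_cases i <;> simp [s]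
    · have e : ∀ (X B S : Matrix (Fin 12) (Fin 12) ℝ),
          (X * S)ᵀ * B * (X * S) = Sᵀ * (Xᵀ * B * X) * S := by
        intro X B S
        simp only [Matrix.transpose_mul, Matrix.mul_assoc]
      refine (e _ _ _).trans ?_
      have h' : (Qm.map (Int.cast : ℤ → ℝ))ᵀ * A.map ((↑·) : ℤ → ℝ) * Qm.map (Int.cast : ℤ → ℝ)
        = Matrix.diagonal (fun i => (dv i : ℝ)) := h
      rw [h', Matrix.diagonal_transpose, Matrix.diagonal_mul_diagonal,
        Matrix.diagonal_mul_diagonal]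
      congr 1
      have key : ∀ x : ℝ, 0 < x → (√x)⁻¹ * x * (√x)⁻¹ = 1 := by
        intro x hx
        have h1 := Real.mul_self_sqrt hx.le
        have h3 : √x ≠ 0 := (Real.sqrt_pos.2 hx).ne'
        field_simp
        nlinarith
      have k0 := key 2 (by norm_num)
      have k1 := key 3744 (by norm_num)
      have k2 := key 234 (by norm_num)
      funext i
      fin_cases i
      · simpa [s, dv] using k0
      · simpa [s, dv] using k1
      · simpa [s, dv] using k2
      all_goals simp [s, dv]
  · refine ⟨![7/48, -13/48, 1/6, 0, 0, 0, 0, 0, 0, 0, 0, 0], ?_, ?_⟩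
    · decide +kernel
    · decide +kernel
end
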